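/- Let X ∈ Σ⁺ occur in T ∈ Σ* at position i, and let k ≥ 0 be such that X̄_k ≠ ε. Let i_k be the unique position of T_k with |exp(T_k[0..i_k))| = i + |exp(L_0 ⋯ L_{k−1})| (which carries an occurrence of X̄_k), and let i'_k be the unique position with |exp(T_k[0..i'_k))| ≤ i < |exp(T_k[0..i'_k+1))| (the position of the ancestor of T[i] in T_k). Then i'_k ≤ i_k ≤ i'_k + k. -/

import Mathlib

namespace IPM

/-- The universal alphabet `𝒜`: least fixed point of `𝒜 = Σ ∪ (𝒜 × 𝒜) ∪ (𝒜 × ℤ_{≥2})`. -/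
inductive UA (α : Type) where
  | sym  : α → UA α
  | pair : UA α → UA α → UA α
  | pow  : UA α → {m : ℕ // 2 ≤ m} → UA α
  deriving DecidableEq

variable {α : Type} [DecidableEq α]

/-- Expansion of a single symbol of the universal alphabet. -/
def expand : UA α → List α
  | .sym c => [c]
  | .pair b c => expand b ++ expand c
  | .pow b m => (List.replicate m.1 (expand b)).flatten

/-- Expansion of a string of symbols (homomorphic extension). -/
def expandStr (T : List (UA α)) : List α := (T.map expand).flatten

/-- Decomposition of a string into blocks: a block boundary is placed between
adjacent symbols `a` and `b` unless `glue a b` holds. -/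
def chunks {γ : Type} (glue : γ → γ → Bool) : List γ → List (List γ)
  | [] => []
  | [a] => [[a]]
  | a :: b :: rest =>
    match chunks glue (b :: rest) with
    | [] => [[a]]
    | blk :: G => if glue a b then (a :: blk) :: G else [a] :: blk :: G

/-- Collapse a block: a length-1 block stays, a power block `A^m` (m ≥ 2) becomes the
symbol `(A, m)`, and a length-2 block `BC` with `B ≠ C` becomes the symbol `(B, C)`. -/
def collapse : List (UA α) → List (UA α)
  | [] => []
  | [a] => [a]
  | a :: b :: rest =>
    if (b :: rest).all (fun x => decide (x = a)) then
      [.pow a ⟨rest.length + 2, by omega⟩]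
    else [.pair a b]

/-- Shrinking with respect to a glue relation: decompose into blocks and collapse them. -/
def shrinkWith (glue : UA α → UA α → Bool) (T : List (UA α)) : List (UA α) :=
  ((chunks glue T).map collapse).flatten

/-- In the `rle_B`-decomposition, no boundary is placed between `a` and `b` iff `a = b ∈ B`. -/
def rleGlue (B : Set (UA α)) [DecidablePred (· ∈ B)] : UA α → UA α → Bool :=
  fun a b => decide (a = b ∧ a ∈ B)

/-- In the `pc_{L,R}`-decomposition, no boundary is placed between `a` and `b`
iff `a ∈ L` and `b ∈ R`. -/
def pcGlue (L R : Set (UA α)) [DecidablePred (· ∈ L)] [DecidablePred (· ∈ R)] :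
    UA α → UA α → Bool :=
  fun a b => decide (a ∈ L ∧ b ∈ R)

/-- Restricted run-length encoding `rle_B`. -/
def rleC (B : Set (UA α)) [DecidablePred (· ∈ B)] (T : List (UA α)) : List (UA α) :=
  shrinkWith (rleGlue B) T

/-- Restricted pair compression `pc_{L,R}`. -/
def pcC (L R : Set (UA α)) [DecidablePred (· ∈ L)] [DecidablePred (· ∈ R)]
    (T : List (UA α)) : List (UA α) :=
  shrinkWith (pcGlue L R) T


section Recompression

variable (Bs Ls Rs : ℕ → Set (UA α))
variable [∀ k, DecidablePred (· ∈ Bs k)] [∀ k, DecidablePred (· ∈ Ls k)]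
variable [∀ k, DecidablePred (· ∈ Rs k)]

/-- The glue relation of `shrink_k`: run-length encoding `rle_{ℬ_k}` for odd `k`,
pair compression `pc_{ℒ_k,ℛ_k}` for even `k`. -/
def glueK (k : ℕ) : UA α → UA α → Bool :=
  if k % 2 = 1 then rleGlue (Bs k) else pcGlue (Ls k) (Rs k)

/-- `shrink_k`: `rle_{ℬ_k}` for odd `k`, `pc_{ℒ_k,ℛ_k}` for even `k`. -/
def shrinkK (k : ℕ) (T : List (UA α)) : List (UA α) :=
  shrinkWith (glueK Bs Ls Rs k) T

/-- The restricted recompression sequence: `T_0 = T`, `T_k = shrink_k(T_{k-1})`. -/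
def Tseq (T : List α) : ℕ → List (UA α)
  | 0 => T.map .sym
  | k + 1 => shrinkK Bs Ls Rs (k + 1) (Tseq T k)

/-- Whether a string consists of copies of a single symbol. -/
def isUniform : List (UA α) → Bool
  | [] => true
  | a :: rest => rest.all (fun x => decide (x = a))

/-- The leftmost block of the `glue`-decomposition of `T`, or `ε` if there are no
blocks or that block consists of two distinct symbols. -/
def leftBlock (glue : UA α → UA α → Bool) (T : List (UA α)) : List (UA α) :=
  match chunks glue T with
  | [] => []
  | blk :: _ => if isUniform blk then blk else []

/-- The rightmost block of the `glue`-decomposition of `T`, or `ε` if there is at most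
one block or that block consists of two distinct symbols. -/
def rightBlock (glue : UA α → UA α → Bool) (T : List (UA α)) : List (UA α) :=
  let G := chunks glue T
  if G.length ≤ 1 then []
  else
    let blk := G.getLastD []
    if isUniform blk then blk else []

/-- The popped-sequence strings `X̄_k`: `X̄_0 = X` and
`X̄_{k+1} = shrink_{k+1}(X̄'_k)` where `X̄_k = L_k ⬝ X̄'_k ⬝ R_k`. -/
def Xbar (X : List α) : ℕ → List (UA α)
  | 0 => X.map .sym
  | k + 1 =>
    let Xb := Xbar X k
    let L := leftBlock (glueK Bs Ls Rs (k + 1)) Xb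
    let R := rightBlock (glueK Bs Ls Rs (k + 1)) Xb
    shrinkK Bs Ls Rs (k + 1) ((Xb.drop L.length).take (Xb.length - L.length - R.length))

/-- The popped-sequence block `L_k`. -/
def Lblk (X : List α) (k : ℕ) : List (UA α) :=
  leftBlock (glueK Bs Ls Rs (k + 1)) (Xbar Bs Ls Rs X k)

/-- The popped-sequence block `R_k`. -/
def Rblk (X : List α) (k : ℕ) : List (UA α) :=
  rightBlock (glueK Bs Ls Rs (k + 1)) (Xbar Bs Ls Rs X k)

end Recompression

/-! The occurrence of `X̄_k` in `T_k` is tracked together with a splitting `T_k = A B X̄_k S`, where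
`A` expands to at most `i` letters and `B` has at most `k` symbols. One shrinking step preserves
the shape. Popping makes both ends of what remains of `X̄_k` block boundaries in every context, so
it shrinks as it does in isolation. To the left of it, `A B L_k` is cut in front of the block
straddling the end of `A`; the blocks from there on number at most those of `B L_k`, hence at most
`|B| + 1`. Since prefix lengths of expansions increase strictly, `i_k = |A| + |B|` and
`|A| ≤ i'_k`. -/

section SplitBy

variable {γ : Type*} {r : γ → γ → Bool}

theorem splitBy_cons_cons_of_not_rel {a b : γ} (h : r a b = false) (l : List γ) :
    (a :: b :: l).splitBy r = [a] :: (b :: l).splitBy r :=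
  List.splitBy_append_cons (l := [a]) l (by simpa using h)

theorem splitBy_cons_cons_of_rel {a b : γ} (h : r a b = true) {l g : List γ} {G : List (List γ)}
    (hl : (b :: l).splitBy r = g :: G) : (a :: b :: l).splitBy r = (a :: g) :: G := by
  rw [List.splitBy_eq_iff] at hl ⊢
  obtain ⟨hflat, hnil, hchain, hends⟩ := hl
  obtain ⟨c, g, rfl⟩ := List.exists_cons_of_ne_nil (List.ne_of_not_mem_cons hnil).symm
  obtain rfl : b = c := by simpa using congrArg List.head? hflat
  refine ⟨by simpa using hflat, by simpa using hnil, by simp_all, ?_⟩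
  rw [List.isChain_cons] at hends ⊢
  simpa using hends

theorem length_splitBy_cons_of_rel {a b : γ} (h : r a b = true) (l : List γ) :
    ((a :: b :: l).splitBy r).length = ((b :: l).splitBy r).length := by
  obtain ⟨g, G, hG⟩ := List.exists_cons_of_ne_nil
    (List.splitBy_ne_nil (r := r).2 (List.cons_ne_nil b l))
  rw [splitBy_cons_cons_of_rel h hG, hG, List.length_cons, List.length_cons]

theorem length_splitBy_cons_le (a : γ) (l : List γ) :
    ((a :: l).splitBy r).length ≤ (l.splitBy r).length + 1 := by
  cases l with
  | nil => simp [List.splitBy_of_isChain]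
  | cons b l =>
    cases h : r a b
    · rw [splitBy_cons_cons_of_not_rel h, List.length_cons]
    · exact (length_splitBy_cons_of_rel h l).trans_le (Nat.le_succ _)

theorem length_splitBy_append_le (l m : List γ) :
    ((l ++ m).splitBy r).length ≤ l.length + (m.splitBy r).length := by
  induction l with
  | nil => simp
  | cons a l ih =>
    have := length_splitBy_cons_le (r := r) a (l ++ m)
    simp only [List.cons_append, List.length_cons]
    omega

end SplitBy

/-- The `glue`-decomposition of `A ++ B` has a block boundary between `A` and `B`. This holds
vacuously if `A` or `B` is empty. -/
def Boundary {γ : Type} (glue : γ → γ → Bool) (A B : List γ) : Prop :=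
  ∀ a ∈ A.getLast?, ∀ b ∈ B.head?, glue a b = false

section Blocks

variable {γ : Type} {glue : γ → γ → Bool} {A B : List γ}

theorem boundary_append_left_iff (hA : A ≠ []) (P : List γ) :
    Boundary glue (P ++ A) B ↔ Boundary glue A B := by
  rw [Boundary, List.getLast?_append_of_ne_nil _ hA, Boundary]

theorem boundary_append_right_iff (hB : B ≠ []) (S : List γ) :
    Boundary glue A (B ++ S) ↔ Boundary glue A B := by
  rw [Boundary, List.head?_append_of_ne_nil _ hB, Boundary]

theorem chunks_eq_splitBy (glue : γ → γ → Bool) (T : List γ) :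
    chunks glue T = T.splitBy glue := by
  fun_induction chunks glue T with
  | case1 => rfl
  | case2 a => rfl
  | case3 a b rest h ih => simp [h] at ih
  | case4 a b rest blk G h hab ih => exact (splitBy_cons_cons_of_rel hab (ih.symm.trans h)).symm
  | case5 a b rest blk G h hab ih =>
    rw [splitBy_cons_cons_of_not_rel (by simpa using hab), ← ih, h]

theorem flatten_chunks (glue : γ → γ → Bool) (T : List γ) : (chunks glue T).flatten = T := by
  rw [chunks_eq_splitBy, List.flatten_splitBy]

theorem boundary_of_chunks_eq_append {T : List γ} {G H : List (List γ)}
    (h : chunks glue T = G ++ H) : Boundary glue G.flatten H.flatten := by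
  rw [chunks_eq_splitBy, List.splitBy_eq_iff] at h
  obtain ⟨-, hnil, -, hends⟩ := h
  rcases List.eq_nil_or_concat' G with rfl | ⟨G, g, rfl⟩
  · simp [Boundary]
  rcases H with _ | ⟨h, H⟩
  · simp [Boundary]
  obtain ⟨hg, hh, hgh⟩ := (List.isChain_append.1 hends).2.2 g (by simp) h (by simp)
  rw [List.flatten_concat, List.flatten_cons, boundary_append_left_iff hg,
    boundary_append_right_iff hh]
  simpa [Boundary, List.getLast?_eq_some_getLast hg, List.head?_eq_some_head hh] using hgh

theorem length_chunks_le_one_of_isChain (h : A.IsChain (glue · ·)) :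
    (chunks glue A).length ≤ 1 := by
  rcases eq_or_ne A [] with rfl | hA
  · simp [chunks]
  · rw [chunks_eq_splitBy, List.splitBy_of_isChain hA h, List.length_singleton]

/-- Cut `A` in front of the block of `A ++ C` that straddles the end of `A`. -/
theorem exists_boundary_length_chunks_le (glue : γ → γ → Bool) (A C : List γ) :
    ∃ A₀ A₁, A = A₀ ++ A₁ ∧ Boundary glue A₀ (A₁ ++ C) ∧
      (chunks glue (A₁ ++ C)).length ≤ (chunks glue C).length := by
  simp only [chunks_eq_splitBy]
  induction A with
  | nil => exact ⟨[], [], rfl, by simp [Boundary], le_rfl⟩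
  | cons a A ih =>
    obtain ⟨A₀, A₁, rfl, hbd, hlen⟩ := ih
    rcases eq_or_ne A₀ [] with rfl | hA₀
    · by_cases ha : Boundary glue [a] (A₁ ++ C)
      · exact ⟨[a], A₁, rfl, ha, hlen⟩
      · simp only [Boundary, List.getLast?_singleton, Option.mem_some_iff, forall_eq', not_forall,
          Bool.not_eq_false] at ha
        obtain ⟨b, hb, hab⟩ := ha
        obtain ⟨l, hl⟩ := List.head?_eq_some_iff.1 hb
        refine ⟨[], a :: A₁, rfl, by simp [Boundary], ?_⟩
        rwa [List.cons_append, hl, length_splitBy_cons_of_rel hab, ← hl]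
    · exact ⟨a :: A₀, A₁, rfl, (boundary_append_left_iff hA₀ [a]).2 hbd, hlen⟩

end Blocks

/-- Every block is a run of a single symbol or a pair of distinct symbols, and pairs do not extend
to longer blocks. This is what the glue relations of `rle_B` and of `pc_{L,R}` with disjoint `L`
and `R` have in common. -/
def RunOrPair {γ : Type} (glue : γ → γ → Bool) : Prop :=
  ∀ ⦃a b c⦄, glue a b = true → glue b c = true → a = b ∧ b = c

theorem runOrPair_rleGlue {α : Type} [DecidableEq α] (B : Set (UA α)) [DecidablePred (· ∈ B)] :
    RunOrPair (rleGlue B) := by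
  intro a b c hab hbc
  simp only [rleGlue, decide_eq_true_eq] at hab hbc
  exact ⟨hab.1, hbc.1⟩

theorem runOrPair_pcGlue {β : Type} {L R : Set (UA β)} [DecidablePred (· ∈ L)]
    [DecidablePred (· ∈ R)] (h : Disjoint L R) : RunOrPair (pcGlue L R) := by
  intro a b c hab hbc
  simp only [pcGlue, decide_eq_true_eq] at hab hbc
  exact (Set.disjoint_left.1 h hbc.1 hab.2).elim

section RunOrPair

variable {glue : UA α → UA α → Bool} {blk : List (UA α)}

theorem isUniform_iff_isChain_eq {l : List (UA α)} :
    isUniform l = true ↔ l.IsChain (· = ·) := by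
  cases l with
  | nil => simp [isUniform]
  | cons a l => simp [isUniform, List.isChain_eq_iff_eq_replicate, List.eq_replicate_iff]

theorem RunOrPair.isUniform_of_isChain (hg : RunOrPair glue) {a b c : UA α} {l : List (UA α)}
    (h : (a :: b :: c :: l).IsChain (glue · ·)) : isUniform (a :: b :: c :: l) = true := by
  rw [isUniform_iff_isChain_eq]
  induction l generalizing a b c with
  | nil => simpa using hg (by simp_all) (by simp_all)
  | cons d l ih =>
    simp only [List.isChain_cons_cons] at h ih ⊢
    exact ⟨(hg h.1 h.2.1).1, ih h.2⟩

theorem RunOrPair.exists_eq_pair (hg : RunOrPair glue) (hchain : blk.IsChain (glue · ·))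
    (hblk : isUniform blk = false) :
    ∃ a b, blk = [a, b] ∧ a ≠ b ∧ glue a b = true := by
  match blk with
  | [] => simp [isUniform] at hblk
  | [a] => simp [isUniform] at hblk
  | [a, b] => exact ⟨a, b, rfl, by simpa [isUniform, eq_comm] using hblk, by simpa using hchain⟩
  | a :: b :: c :: l => simp [hg.isUniform_of_isChain hchain] at hblk

theorem RunOrPair.boundary_append_of_not_isUniform (hg : RunOrPair glue)
    (hchain : blk.IsChain (glue · ·)) (hblk : isUniform blk = false) (P S : List (UA α)) :
    Boundary glue P (blk ++ S) ∧ Boundary glue (P ++ blk) S := by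
  obtain ⟨a, b, rfl, hne, hab⟩ := hg.exists_eq_pair hchain hblk
  constructor
  · suffices ∀ p ∈ P.getLast?, glue p a = false by simpa [Boundary] using this
    exact fun p _ => Bool.eq_false_iff.2 fun hpa => hne (hg hpa hab).2
  · suffices ∀ s ∈ S.head?, glue b s = false by simpa [Boundary] using this
    exact fun s _ => Bool.eq_false_iff.2 fun hbs => hne (hg hab hbs).1

end RunOrPair

section Expansion

variable {β : Type}

theorem expandStr_append (A B : List (UA β)) :
    expandStr (A ++ B) = expandStr A ++ expandStr B := by
  simp [expandStr]

theorem expandStr_flatten (G : List (List (UA β))) :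
    expandStr G.flatten = (G.map expandStr).flatten := by
  induction G with
  | nil => rfl
  | cons g G ih => rw [List.flatten_cons, expandStr_append, ih, List.map_cons, List.flatten_cons]

theorem expandStr_map_sym (l : List β) : expandStr (l.map .sym) = l := by
  induction l with
  | nil => rfl
  | cons a l ih => simpa [expandStr, expand] using ih

theorem expand_ne_nil (a : UA β) : expand a ≠ [] := by
  induction a with
  | sym c => simp [expand]
  | pair b c hb _ => simp [expand, hb]
  | pow b m hb => simp [expand, hb, (zero_lt_two.trans_le m.2).ne']

theorem strictMonoOn_length_expandStr_take (T : List (UA β)) :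
    StrictMonoOn (fun j => (expandStr (T.take j)).length) (Set.Iic T.length) := by
  refine strictMonoOn_of_lt_add_one Set.ordConnected_Iic fun j _ _ hj => ?_
  have hlt : j < T.length := hj
  have hpos : 0 < (expandStr [T[j]]).length :=
    List.length_pos_iff.2 (by simpa [expandStr] using expand_ne_nil T[j])
  simp only [List.take_add_one, List.getElem?_eq_getElem hlt, Option.toList_some,
    expandStr_append, List.length_append]
  omega

end Expansion

section Shrink

variable {glue : UA α → UA α → Bool}

theorem expandStr_collapse (hg : RunOrPair glue) {blk : List (UA α)}
    (hchain : blk.IsChain (glue · ·)) : expandStr (collapse blk) = expandStr blk := by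
  match blk with
  | [] => rfl
  | [a] => rfl
  | a :: b :: l =>
    cases hu : isUniform (a :: b :: l)
    · obtain ⟨x, y, h, hne, -⟩ := hg.exists_eq_pair hchain hu
      rw [h]
      simp [collapse, hne.symm, expandStr, expand]
    · rw [isUniform_iff_isChain_eq, List.isChain_eq_iff_eq_replicate] at hu
      rw [hu a rfl]
      simp [collapse, List.replicate_succ, expandStr, expand]

theorem length_collapse_le_one (blk : List (UA α)) : (collapse blk).length ≤ 1 := by
  fun_cases collapse blk <;> simp

theorem expandStr_shrinkWith (hg : RunOrPair glue) (T : List (UA α)) :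
    expandStr (shrinkWith glue T) = expandStr T := by
  have hcollapse : ∀ blk ∈ T.splitBy glue, expandStr (collapse blk) = expandStr blk :=
    fun _ hblk => expandStr_collapse hg (List.isChain_of_mem_splitBy hblk)
  rw [shrinkWith, chunks_eq_splitBy, expandStr_flatten, List.map_map, Function.comp_def,
    List.map_congr_left hcollapse, ← expandStr_flatten, List.flatten_splitBy]

theorem length_shrinkWith_le (glue : UA α → UA α → Bool) (T : List (UA α)) :
    (shrinkWith glue T).length ≤ (chunks glue T).length := by
  rw [shrinkWith, List.length_flatten, List.map_map]
  simpa using List.sum_le_card_nsmul ((chunks glue T).map (List.length ∘ collapse)) 1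
    (by simp [length_collapse_le_one])

theorem shrinkWith_append_of_boundary {A B : List (UA α)} (h : Boundary glue A B) :
    shrinkWith glue (A ++ B) = shrinkWith glue A ++ shrinkWith glue B := by
  simp only [shrinkWith, chunks_eq_splitBy, List.splitBy_append h, List.map_append,
    List.flatten_append]

theorem exists_shrinkWith_append_eq (hg : RunOrPair glue) (A B L : List (UA α))
    (hL : L.IsChain (glue · ·)) :
    ∃ A' B', shrinkWith glue (A ++ B ++ L) = A' ++ B' ∧
      (expandStr A').length ≤ (expandStr A).length ∧ B'.length ≤ B.length + 1 := by
  obtain ⟨A₀, A₁, rfl, hbd, hlen⟩ := exists_boundary_length_chunks_le glue A (B ++ L)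
  refine ⟨shrinkWith glue A₀, shrinkWith glue (A₁ ++ (B ++ L)), ?_, ?_, ?_⟩
  · rw [← shrinkWith_append_of_boundary hbd]
    simp only [List.append_assoc]
  · simp [expandStr_shrinkWith hg, expandStr_append]
  · calc (shrinkWith glue (A₁ ++ (B ++ L))).length
        ≤ (chunks glue (A₁ ++ (B ++ L))).length := length_shrinkWith_le _ _
      _ ≤ (chunks glue (B ++ L)).length := hlen
      _ ≤ B.length + (chunks glue L).length := by
        simpa only [chunks_eq_splitBy] using length_splitBy_append_le B L
      _ ≤ B.length + 1 := by gcongr; exact length_chunks_le_one_of_isChain hL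

end Shrink

theorem append_take_drop_append_eq {γ : Type*} {L R X : List γ} (hL : L <+: X) (hR : R <:+ X)
    (hlen : L.length + R.length ≤ X.length) :
    L ++ ((X.drop L.length).take (X.length - L.length - R.length) ++ R) = X := by
  obtain ⟨Y, rfl⟩ := hL
  rw [List.length_append, Nat.add_le_add_iff_left] at hlen
  obtain ⟨M, rfl⟩ := List.suffix_of_suffix_length_le hR (List.suffix_append L Y) hlen
  simp

/-- The string `X̄'` that remains of `X` after popping its leftmost and rightmost blocks. -/
def popped (glue : UA α → UA α → Bool) (X : List (UA α)) : List (UA α) :=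
  (X.drop (leftBlock glue X).length).take
    (X.length - (leftBlock glue X).length - (rightBlock glue X).length)

section Popping

variable {glue : UA α → UA α → Bool} {X : List (UA α)}

theorem leftBlock_eq_of_chunks_eq_cons {blk : List (UA α)} {G : List (List (UA α))}
    (h : chunks glue X = blk :: G) :
    leftBlock glue X = if isUniform blk then blk else [] := by
  rw [leftBlock, h]

theorem rightBlock_eq_of_chunks_eq_concat {blk : List (UA α)} {G : List (List (UA α))}
    (hG : G ≠ []) (h : chunks glue X = G ++ [blk]) :
    rightBlock glue X = if isUniform blk then blk else [] := by
  simp [rightBlock, h, hG]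

theorem rightBlock_eq_nil_of_chunks_eq_singleton {blk : List (UA α)}
    (h : chunks glue X = [blk]) : rightBlock glue X = [] := by
  simp [rightBlock, h]

theorem isChain_leftBlock (glue : UA α → UA α → Bool) (X : List (UA α)) :
    (leftBlock glue X).IsChain (glue · ·) := by
  rcases hc : chunks glue X with _ | ⟨blk, G⟩
  · simp [leftBlock, hc]
  · have hblk : blk ∈ X.splitBy glue := by simp [← chunks_eq_splitBy, hc]
    rw [leftBlock_eq_of_chunks_eq_cons hc]
    split_ifs
    · exact List.isChain_of_mem_splitBy hblk
    · exact List.isChain_nil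

theorem leftBlock_prefix (glue : UA α → UA α → Bool) (X : List (UA α)) :
    leftBlock glue X <+: X := by
  have hflat := flatten_chunks glue X
  rcases hc : chunks glue X with _ | ⟨blk, G⟩
  · simp [leftBlock, hc]
  · rw [leftBlock_eq_of_chunks_eq_cons hc]
    split_ifs
    · exact ⟨G.flatten, by rw [← hflat, hc, List.flatten_cons]⟩
    · exact List.nil_prefix

theorem rightBlock_suffix (glue : UA α → UA α → Bool) (X : List (UA α)) :
    rightBlock glue X <:+ X := by
  have hflat := flatten_chunks glue X
  rcases List.eq_nil_or_concat' (chunks glue X) with hc | ⟨G, blk, hc⟩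
  · simp [rightBlock, hc]
  rcases eq_or_ne G [] with rfl | hG
  · rw [rightBlock_eq_nil_of_chunks_eq_singleton hc]
    exact List.nil_suffix
  · rw [rightBlock_eq_of_chunks_eq_concat hG hc]
    split_ifs
    · exact ⟨G.flatten, by rw [← hflat, hc, List.flatten_concat]⟩
    · exact List.nil_suffix

theorem boundary_leftBlock (hg : RunOrPair glue) {Y : List (UA α)}
    (hX : leftBlock glue X ++ Y = X) (P : List (UA α)) :
    Boundary glue (P ++ leftBlock glue X) Y := by
  have hflat := flatten_chunks glue X
  rcases hc : chunks glue X with _ | ⟨blk, G⟩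
  · simp_all [Boundary]
  have hblk : blk ∈ X.splitBy glue := by simp [← chunks_eq_splitBy, hc]
  rw [hc, List.flatten_cons] at hflat
  rw [leftBlock_eq_of_chunks_eq_cons hc] at hX ⊢
  split_ifs at hX ⊢ with hu
  · obtain rfl : Y = G.flatten := List.append_cancel_left (hX.trans hflat.symm)
    rw [boundary_append_left_iff (List.ne_nil_of_mem_splitBy hblk)]
    simpa using boundary_of_chunks_eq_append (G := [blk]) hc
  · rw [List.append_nil, ← List.nil_append Y, hX, ← hflat]
    exact (hg.boundary_append_of_not_isUniform (List.isChain_of_mem_splitBy hblk)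
      (by simpa using hu) P G.flatten).1

theorem boundary_rightBlock (hg : RunOrPair glue) {Z : List (UA α)}
    (hX : Z ++ rightBlock glue X = X) (hL : leftBlock glue X ≠ X) (S : List (UA α)) :
    Boundary glue Z (rightBlock glue X ++ S) := by
  have hflat := flatten_chunks glue X
  rcases List.eq_nil_or_concat' (chunks glue X) with hc | ⟨G, blk, hc⟩
  · simp_all [Boundary]
  have hblk : blk ∈ X.splitBy glue := by simp [← chunks_eq_splitBy, hc]
  rw [hc, List.flatten_concat] at hflat
  by_cases hpair : isUniform blk = false
  · have hR : rightBlock glue X = [] := by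
      rcases eq_or_ne G [] with rfl | hG
      · exact rightBlock_eq_nil_of_chunks_eq_singleton hc
      · simp [rightBlock_eq_of_chunks_eq_concat hG hc, hpair]
    rw [hR, List.append_nil] at hX
    rw [hR, List.nil_append, hX, ← hflat]
    exact (hg.boundary_append_of_not_isUniform (List.isChain_of_mem_splitBy hblk)
      hpair G.flatten S).2
  · rw [Bool.not_eq_false] at hpair
    have hG : G ≠ [] := by
      rintro rfl
      exact hL (by simpa [leftBlock_eq_of_chunks_eq_cons hc, hpair] using hflat)
    rw [rightBlock_eq_of_chunks_eq_concat hG hc, if_pos hpair] at hX ⊢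
    obtain rfl : Z = G.flatten := List.append_cancel_right (hX.trans hflat.symm)
    rw [boundary_append_right_iff (List.ne_nil_of_mem_splitBy hblk)]
    simpa using boundary_of_chunks_eq_append hc

theorem leftBlock_append_popped_append_rightBlock (h : popped glue X ≠ []) :
    leftBlock glue X ++ (popped glue X ++ rightBlock glue X) = X := by
  refine append_take_drop_append_eq (leftBlock_prefix glue X) (rightBlock_suffix glue X) ?_
  by_contra hlt
  refine h ?_
  rw [popped, Nat.sub_sub, Nat.sub_eq_zero_of_le (not_le.1 hlt).le, List.take_zero]

theorem boundary_popped (hg : RunOrPair glue) (h : popped glue X ≠ []) (P S : List (UA α)) :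
    Boundary glue (P ++ leftBlock glue X) (popped glue X ++ (rightBlock glue X ++ S)) ∧
      Boundary glue (popped glue X) (rightBlock glue X ++ S) := by
  have hX := leftBlock_append_popped_append_rightBlock h
  constructor
  · rw [boundary_append_right_iff h, ← boundary_append_right_iff h (rightBlock glue X)]
    exact boundary_leftBlock hg hX P
  · have hL : leftBlock glue X ≠ X := fun hL => h (by simp [popped, hL])
    rw [← boundary_append_left_iff h (leftBlock glue X)]
    exact boundary_rightBlock hg (by rw [List.append_assoc, hX]) hL S

theorem shrinkWith_append_append_of_popped_ne_nil (hg : RunOrPair glue) (h : popped glue X ≠ [])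
    (P S : List (UA α)) :
    shrinkWith glue (P ++ X ++ S) = shrinkWith glue (P ++ leftBlock glue X) ++
      shrinkWith glue (popped glue X) ++ shrinkWith glue (rightBlock glue X ++ S) := by
  obtain ⟨hl, hr⟩ := boundary_popped hg h P S
  rw [List.append_assoc (shrinkWith glue _), ← shrinkWith_append_of_boundary hr,
    ← shrinkWith_append_of_boundary hl]
  congr 1
  conv_lhs => rw [← leftBlock_append_popped_append_rightBlock h]
  simp only [List.append_assoc]

end Popping

/-- An occurrence `T = A B X S` of `X` in `T` such that `A B` expands to `p` letters, at most `i` of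
which come from `A`, and `B` has at most `d` symbols. The cut between `A` and `B` stays in front of
the ancestor of letter `i`, so `d` bounds the distance from that ancestor to `X`. -/
def OccursWithin {β : Type} (T X : List (UA β)) (i p d : ℕ) : Prop :=
  ∃ A B S, T = A ++ B ++ X ++ S ∧ (expandStr A).length ≤ i ∧
    (expandStr (A ++ B)).length = p ∧ B.length ≤ d

theorem occursWithin_map_sym {β : Type} {T X : List β} {i : ℕ} (hi : i ≤ T.length)
    (hocc : (T.drop i).take X.length = X) :
    OccursWithin (T.map .sym) (X.map .sym) i i 0 := by
  have hT : T = T.take i ++ X ++ T.drop (i + X.length) := by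
    calc T = T.take (i + X.length) ++ T.drop (i + X.length) := (List.take_append_drop _ _).symm
      _ = T.take i ++ X ++ T.drop (i + X.length) := by rw [List.take_add, hocc]
  have hlen : (expandStr ((T.take i).map .sym)).length = i := by
    rw [expandStr_map_sym, List.length_take_of_le hi]
  refine ⟨(T.take i).map .sym, [], (T.drop (i + X.length)).map .sym, ?_, hlen.le, ?_, le_rfl⟩
  · simp only [List.append_nil, ← List.map_append, ← hT]
  · rwa [List.append_nil]

theorem OccursWithin.shrink {glue : UA α → UA α → Bool} (hg : RunOrPair glue)
    {T X : List (UA α)} {i p d : ℕ} (h : OccursWithin T X i p d) (hX : popped glue X ≠ []) :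
    OccursWithin (shrinkWith glue T) (shrinkWith glue (popped glue X)) i
      (p + (expandStr (leftBlock glue X)).length) (d + 1) := by
  obtain ⟨A, B, S, rfl, hA, rfl, hB⟩ := h
  obtain ⟨A', B', hsplit, hA', hB'⟩ :=
    exists_shrinkWith_append_eq hg A B (leftBlock glue X) (isChain_leftBlock glue X)
  refine ⟨A', B', shrinkWith glue (rightBlock glue X ++ S), ?_, hA'.trans hA, ?_,
    hB'.trans (Nat.succ_le_succ hB)⟩
  · rw [shrinkWith_append_append_of_popped_ne_nil hg hX, hsplit]
  · rw [← hsplit, expandStr_shrinkWith hg, expandStr_append, List.length_append]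

theorem OccursWithin.position_le_add {β : Type} {T X : List (UA β)} {i p d : ℕ}
    (h : OccursWithin T X i p d) {j j' : ℕ} (hj : j ≤ T.length)
    (hjp : (expandStr (T.take j)).length = p) (hj' : j' < T.length)
    (hij' : i < (expandStr (T.take (j' + 1))).length) : j ≤ j' + d := by
  have hmono := strictMonoOn_length_expandStr_take T
  obtain ⟨A, B, S, hT, hA, hAB, hB⟩ := h
  have htakeA : T.take A.length = A := by simp [hT]
  have htakeAB : T.take (A ++ B).length = A ++ B := by
    rw [hT, List.append_assoc, List.take_left]
  have hlenAB : (A ++ B).length ≤ T.length := by simp [hT]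
  have hlenA : A.length ≤ (A ++ B).length := by simp
  have hj_eq : j = (A ++ B).length :=
    hmono.injOn hj hlenAB (by simp only [htakeAB, hjp, hAB])
  have hA_lt : A.length < j' + 1 :=
    (hmono.lt_iff_lt (hlenA.trans hlenAB) hj').1 (by simpa only [htakeA] using hA.trans_lt hij')
  rw [hj_eq, List.length_append]
  omega

section Recompression

variable (Bs Ls Rs : ℕ → Set (UA α))
variable [∀ k, DecidablePred (· ∈ Bs k)] [∀ k, DecidablePred (· ∈ Ls k)]
variable [∀ k, DecidablePred (· ∈ Rs k)]

theorem runOrPair_glueK (hdisj : ∀ k, k % 2 = 0 → Disjoint (Ls k) (Rs k)) (k : ℕ) :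
    RunOrPair (glueK Bs Ls Rs k) := by
  unfold glueK
  split_ifs with hk
  · exact runOrPair_rleGlue _
  · exact runOrPair_pcGlue (hdisj k (Nat.mod_two_ne_one.1 hk))

theorem length_expandStr_Lblk_succ (X : List α) (k : ℕ) :
    (expandStr ((List.range (k + 1)).map (Lblk Bs Ls Rs X)).flatten).length =
      (expandStr ((List.range k).map (Lblk Bs Ls Rs X)).flatten).length +
        (expandStr (Lblk Bs Ls Rs X k)).length := by
  simp [List.range_succ, expandStr_append]

theorem popped_ne_nil_of_Xbar_succ_ne_nil {X : List α} {k : ℕ}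
    (h : Xbar Bs Ls Rs X (k + 1) ≠ []) :
    popped (glueK Bs Ls Rs (k + 1)) (Xbar Bs Ls Rs X k) ≠ [] := by
  contrapose! h
  change shrinkWith _ (popped _ _) = []
  rw [h]
  rfl

theorem occursWithin_Tseq (hdisj : ∀ k, k % 2 = 0 → Disjoint (Ls k) (Rs k))
    {T X : List α} {i : ℕ} (hi : i ≤ T.length) (hocc : (T.drop i).take X.length = X)
    (k : ℕ) (hk : Xbar Bs Ls Rs X k ≠ []) :
    OccursWithin (Tseq Bs Ls Rs T k) (Xbar Bs Ls Rs X k) i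
      (i + (expandStr ((List.range k).map (Lblk Bs Ls Rs X)).flatten).length) k := by
  induction k with
  | zero => exact occursWithin_map_sym hi hocc
  | succ k ih =>
    have hpop := popped_ne_nil_of_Xbar_succ_ne_nil Bs Ls Rs hk
    have hk' : Xbar Bs Ls Rs X k ≠ [] := fun h => hpop (by simp [popped, h])
    rw [length_expandStr_Lblk_succ, ← add_assoc]
    exact (ih hk').shrink (runOrPair_glueK Bs Ls Rs hdisj (k + 1)) hpop

end Recompression

/-- Let `X ∈ Σ⁺` occur in `T ∈ Σ*` at position `i`, and let `k ≥ 0`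
with `X̄_k ≠ ε`. Let `i_k` be the position of `T_k` with
`|exp(T_k[0..i_k))| = i + |exp(L_0 ⋯ L_{k−1})|` and let `i'_k` be the position with
`|exp(T_k[0..i'_k))| ≤ i < |exp(T_k[0..i'_k+1))|` (the ancestor of `T[i]` in `T_k`).
Then `i'_k ≤ i_k ≤ i'_k + k`. -/
theorem anchor_distance (Bs Ls Rs : ℕ → Set (UA α))
    [∀ k, DecidablePred (· ∈ Bs k)] [∀ k, DecidablePred (· ∈ Ls k)]
    [∀ k, DecidablePred (· ∈ Rs k)]
    (hdisj : ∀ k, k % 2 = 0 → Disjoint (Ls k) (Rs k))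
    (T X : List α) (hX : X ≠ []) (i : ℕ)
    (hocc : i + X.length ≤ T.length ∧ (T.drop i).take X.length = X)
    (k : ℕ) (hk : Xbar Bs Ls Rs X k ≠ [])
    (ik : ℕ) (hik1 : ik ≤ (Tseq Bs Ls Rs T k).length)
    (hik2 : (expandStr ((Tseq Bs Ls Rs T k).take ik)).length
      = i + (expandStr (((List.range k).map (Lblk Bs Ls Rs X)).flatten)).length)
    (i'k : ℕ) (hi'k1 : i'k < (Tseq Bs Ls Rs T k).length)
    (hi'k2 : (expandStr ((Tseq Bs Ls Rs T k).take i'k)).length ≤ i)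
    (hi'k3 : i < (expandStr ((Tseq Bs Ls Rs T k).take (i'k + 1))).length) :
    i'k ≤ ik ∧ ik ≤ i'k + k := by
  have hwithin := occursWithin_Tseq Bs Ls Rs hdisj (by omega) hocc.2 k hk
  have hmono := strictMonoOn_length_expandStr_take (Tseq Bs Ls Rs T k)
  exact ⟨(hmono.le_iff_le hi'k1.le hik1).1 (hi'k2.trans (hik2 ▸ Nat.le_add_right _ _)),
    hwithin.position_le_add hik1 hik2 hi'k1 hi'k3⟩

end IPM
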